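/- Let C be a 2-reduced dg coalgebra over ℚ, A a connective (non-negatively graded) dg algebra over ℚ, and τ : C ⇝ A a twisting chain. If f : M → M' is a quasi-isomorphism between bounded below left dg A-modules, then the induced map of twisted coextensions C ⊗^τ M → C ⊗^τ M' is a quasi-isomorphism. -/

import Mathlib

open scoped TensorProduct

noncomputable section

/-- A homologically graded differential graded `ℚ`-vector space (chain complex of
`ℚ`-vector spaces presented as a graded module with a degree `-1` square-zero differential). -/
structure DGVect : Type 1 where
  carrier : Type
  [isAddCommGroup : AddCommGroup carrier]
  [isModule : Module ℚ carrier]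
  grading : ℤ → Submodule ℚ carrier
  [isDecomp : DirectSum.Decomposition grading]
  d : carrier →ₗ[ℚ] carrier
  d_mem : ∀ (n : ℤ), ∀ x ∈ grading n, d x ∈ grading (n - 1)
  d_sq : d.comp d = 0

attribute [instance] DGVect.isAddCommGroup DGVect.isModule DGVect.isDecomp

/-- The operator acting on the degree `n` graded component by `(-1)^(k*n)`. -/
def signOpOf {V : Type} [AddCommGroup V] [Module ℚ V] (g : ℤ → Submodule ℚ V)
    [DirectSum.Decomposition g] (k : ℤ) : V →ₗ[ℚ] V :=
  (DirectSum.toModule ℚ ℤ V fun n => ((-1 : ℚ) ^ (k * n)) • (g n).subtype).comp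
    (DirectSum.decomposeLinearEquiv g).toLinearMap

/-- The Koszul parity operator, acting by `(-1)^n` in degree `n`. -/
def parityOf {V : Type} [AddCommGroup V] [Module ℚ V] (g : ℤ → Submodule ℚ V)
    [DirectSum.Decomposition g] : V →ₗ[ℚ] V := signOpOf g 1

def DGVect.parity (V : DGVect) : V.carrier →ₗ[ℚ] V.carrier := parityOf V.grading

/-- A graded object is bounded below if it vanishes in all sufficiently negative degrees. -/
def DGVect.BoundedBelow (V : DGVect) : Prop := ∃ b : ℤ, ∀ n : ℤ, n < b → V.grading n = ⊥

/-- The Koszul signed braiding `v ⊗ w ↦ (-1)^{|v||w|} w ⊗ v` of graded vector spaces. -/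
def kSwapOf {V W : Type} [AddCommGroup V] [Module ℚ V] [AddCommGroup W] [Module ℚ W]
    (gV : ℤ → Submodule ℚ V) (gW : ℤ → Submodule ℚ W)
    [DirectSum.Decomposition gV] [DirectSum.Decomposition gW] :
    V ⊗[ℚ] W →ₗ[ℚ] W ⊗[ℚ] V :=
  TensorProduct.lift
    ((DirectSum.toModule ℚ ℤ (W →ₗ[ℚ] W ⊗[ℚ] V) (fun i =>
        (((DirectSum.toModule ℚ ℤ (V →ₗ[ℚ] W ⊗[ℚ] V) (fun j =>
              ((-1 : ℚ) ^ (i * j)) • ((TensorProduct.mk ℚ W V).comp (gW j).subtype))).comp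
            (DirectSum.decomposeLinearEquiv gW).toLinearMap).flip).comp
          (gV i).subtype)).comp
      (DirectSum.decomposeLinearEquiv gV).toLinearMap)

/-- The degree `n` part of the tensor product grading:
the span of the homogeneous tensors of total degree `n`. -/
def tensorGrading {V W : Type} [AddCommGroup V] [Module ℚ V] [AddCommGroup W] [Module ℚ W]
    (gV : ℤ → Submodule ℚ V) (gW : ℤ → Submodule ℚ W) (n : ℤ) : Submodule ℚ (V ⊗[ℚ] W) :=
  ⨆ p : {p : ℤ × ℤ // p.1 + p.2 = n},
    LinearMap.range (TensorProduct.map (gV p.1.1).subtype (gW p.1.2).subtype)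

/-- `f` is a quasi-isomorphism from the complex `(V, dV)` to the complex `(W, dW)`:
it induces a bijection on homology (`ker d / im d`). -/
def IsQuasiIso {V W : Type} [AddCommGroup V] [Module ℚ V] [AddCommGroup W] [Module ℚ W]
    (dV : V →ₗ[ℚ] V) (dW : W →ₗ[ℚ] W) (f : V →ₗ[ℚ] W) : Prop :=
  (∀ x : V, dV x = 0 → (∃ y, f x = dW y) → ∃ z, x = dV z) ∧
  (∀ w : W, dW w = 0 → ∃ x, dV x = 0 ∧ ∃ y, w - f x = dW y)

/-- A differential graded algebra over `ℚ`. -/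
structure DGAlgebra extends DGVect where
  mul : carrier →ₗ[ℚ] carrier →ₗ[ℚ] carrier
  one : carrier
  one_mem : one ∈ grading 0
  mul_mem : ∀ (i j : ℤ) (x y : carrier), x ∈ grading i → y ∈ grading j →
    mul x y ∈ grading (i + j)
  mul_assoc' : ∀ x y z : carrier, mul (mul x y) z = mul x (mul y z)
  one_mul' : ∀ x : carrier, mul one x = x
  mul_one' : ∀ x : carrier, mul x one = x
  leibniz : ∀ (i : ℤ) (x y : carrier), x ∈ grading i →
    d (mul x y) = mul (d x) y + ((-1 : ℚ) ^ i) • mul x (d y)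

/-- The multiplication of a dg algebra as a map out of the tensor product. -/
def DGAlgebra.mulMap (A : DGAlgebra) : A.carrier ⊗[ℚ] A.carrier →ₗ[ℚ] A.carrier :=
  TensorProduct.lift A.mul

/-- A dg algebra is connective if it is concentrated in non-negative degrees. -/
def DGAlgebra.Connective (A : DGAlgebra) : Prop := ∀ n : ℤ, n < 0 → A.grading n = ⊥

/-- A (coassociative counital) differential graded coalgebra over `ℚ`,
non-negatively graded. -/
structure DGCoalgebra extends DGVect where
  comul : carrier →ₗ[ℚ] carrier ⊗[ℚ] carrier
  counit : carrier →ₗ[ℚ] ℚ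
  nonneg : ∀ n : ℤ, n < 0 → grading n = ⊥
  comul_mem : ∀ (n : ℤ), ∀ x ∈ grading n, comul x ∈ tensorGrading grading grading n
  counit_zero : ∀ (n : ℤ), n ≠ 0 → ∀ x ∈ grading n, counit x = 0
  coassoc : (TensorProduct.assoc ℚ carrier carrier carrier).toLinearMap.comp
      ((TensorProduct.map comul LinearMap.id).comp comul)
      = (TensorProduct.map LinearMap.id comul).comp comul
  counit_comul_left : (TensorProduct.lid ℚ carrier).toLinearMap.comp
      ((TensorProduct.map counit LinearMap.id).comp comul) = LinearMap.id
  counit_comul_right : (TensorProduct.rid ℚ carrier).toLinearMap.comp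
      ((TensorProduct.map LinearMap.id counit).comp comul) = LinearMap.id
  comul_chain : comul.comp d
      = (TensorProduct.map d LinearMap.id + TensorProduct.map (parityOf grading) d).comp comul
  counit_chain : counit.comp d = 0

/-- Cocommutativity: the comultiplication is invariant under the Koszul signed twist. -/
def DGCoalgebra.Cocomm (C : DGCoalgebra) : Prop :=
  (kSwapOf C.grading C.grading).comp C.comul = C.comul

/-- A coaugmented dg coalgebra: a dg coalgebra with a coaugmentation `η : ℚ → C`,
recorded by the grouplike element `one = η 1` in degree `0`. -/
structure CoaugDGCoalgebra extends DGCoalgebra where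
  one : carrier
  one_mem : one ∈ grading 0
  counit_one : counit one = 1
  comul_one : comul one = one ⊗ₜ[ℚ] one

/-- A coaugmented dg coalgebra is 2-reduced if `C₀ = ℚ` (spanned by the coaugmentation)
and `C₁ = 0`. -/
def CoaugDGCoalgebra.TwoReduced (C : CoaugDGCoalgebra) : Prop :=
  C.grading 0 = Submodule.span ℚ {C.one} ∧ C.grading 1 = ⊥

/-- A twisting chain `τ : C ⇝ A`: a degree `-1` linear map satisfying
`d(τc) = -τ(dc) - (-1)^{|c₍₀₎|} τ(c₍₀₎)·τ(c₍₁₎)`. -/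
structure TwistingChain (C : DGCoalgebra) (A : DGAlgebra) where
  toFun : C.carrier →ₗ[ℚ] A.carrier
  mem : ∀ (n : ℤ), ∀ x ∈ C.grading n, toFun x ∈ A.grading (n - 1)
  twist : A.d.comp toFun + toFun.comp C.d
      + A.mulMap.comp ((TensorProduct.map (toFun.comp (parityOf C.grading)) toFun).comp C.comul)
      = 0

/-- A left dg module over a dg algebra. -/
structure DGModule (A : DGAlgebra) extends DGVect where
  smul : A.carrier →ₗ[ℚ] carrier →ₗ[ℚ] carrier
  smul_mem : ∀ (i j : ℤ) (a : A.carrier) (x : carrier), a ∈ A.grading i → x ∈ grading j →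
    smul a x ∈ grading (i + j)
  one_smul' : ∀ x : carrier, smul A.one x = x
  mul_smul' : ∀ (a b : A.carrier) (x : carrier), smul (A.mul a b) x = smul a (smul b x)
  leibniz : ∀ (i : ℤ) (a : A.carrier) (x : carrier), a ∈ A.grading i →
    d (smul a x) = smul (A.d a) x + ((-1 : ℚ) ^ i) • smul a (d x)

/-- The action of a dg module as a map out of the tensor product. -/
def DGModule.actionMap {A : DGAlgebra} (M : DGModule A) :
    A.carrier ⊗[ℚ] M.carrier →ₗ[ℚ] M.carrier := TensorProduct.lift M.smul

/-- A left dg comodule over a dg coalgebra. -/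
structure DGComodule (C : DGCoalgebra) extends DGVect where
  coact : carrier →ₗ[ℚ] C.carrier ⊗[ℚ] carrier
  coact_mem : ∀ (n : ℤ), ∀ x ∈ grading n, coact x ∈ tensorGrading C.grading grading n
  coassoc : (TensorProduct.assoc ℚ C.carrier C.carrier carrier).toLinearMap.comp
      ((TensorProduct.map C.comul LinearMap.id).comp coact)
      = (TensorProduct.map LinearMap.id coact).comp coact
  counit_coact : (TensorProduct.lid ℚ carrier).toLinearMap.comp
      ((TensorProduct.map C.counit LinearMap.id).comp coact) = LinearMap.id
  coact_chain : coact.comp d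
      = (TensorProduct.map C.d LinearMap.id + TensorProduct.map (parityOf C.grading) d).comp coact

/-- Morphisms of dg modules: degree `0` graded chain maps commuting with the action. -/
def IsModuleHom (A : DGAlgebra) (M M' : DGModule A)
    (g : M.carrier →ₗ[ℚ] M'.carrier) : Prop :=
  (∀ (n : ℤ), ∀ x ∈ M.grading n, g x ∈ M'.grading n) ∧
  g.comp M.d = M'.d.comp g ∧
  g.comp M.actionMap = M'.actionMap.comp (TensorProduct.map LinearMap.id g)

/-- Morphisms of dg comodules: degree `0` graded chain maps commuting with the coaction. -/
def IsComoduleHom (C : DGCoalgebra) (N N' : DGComodule C)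
    (f : N.carrier →ₗ[ℚ] N'.carrier) : Prop :=
  (∀ (n : ℤ), ∀ x ∈ N.grading n, f x ∈ N'.grading n) ∧
  f.comp N.d = N'.d.comp f ∧
  (TensorProduct.map LinearMap.id f).comp N.coact = N'.coact.comp f

/-- The `A`-action on a twisted extension `A ⊗_τ N`: multiplication on the first factor. -/
def extAction (A : DGAlgebra) (N : Type) [AddCommGroup N] [Module ℚ N] :
    A.carrier ⊗[ℚ] (A.carrier ⊗[ℚ] N) →ₗ[ℚ] A.carrier ⊗[ℚ] N :=
  (TensorProduct.map A.mulMap LinearMap.id).comp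
    (TensorProduct.assoc ℚ A.carrier A.carrier N).symm.toLinearMap

/-- The differential of the twisted extension `A ⊗_τ N`:
`d(a ⊗ n) = da ⊗ n + (-1)^{|a|} a ⊗ dn - (-1)^{|a|} a·τ(n₍₀₎) ⊗ n₍₁₎`
for a `C`-comodule `(N, dN, ρ)`. -/
def extDiff (C : DGCoalgebra) (A : DGAlgebra) (τ : TwistingChain C A)
    (N : Type) [AddCommGroup N] [Module ℚ N]
    (dN : N →ₗ[ℚ] N) (ρ : N →ₗ[ℚ] C.carrier ⊗[ℚ] N) :
    A.carrier ⊗[ℚ] N →ₗ[ℚ] A.carrier ⊗[ℚ] N :=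
  TensorProduct.map A.d LinearMap.id + TensorProduct.map (parityOf A.grading) dN
    - (TensorProduct.map
        (A.mulMap.comp (TensorProduct.map (parityOf A.grading) τ.toFun)) LinearMap.id).comp
        ((TensorProduct.assoc ℚ A.carrier C.carrier N).symm.toLinearMap.comp
          (TensorProduct.map LinearMap.id ρ))

/-- The `C`-coaction on a twisted coextension `C ⊗^τ M`, namely `Δ ⊗ id`. -/
def coextCoact (C : DGCoalgebra) (M : Type) [AddCommGroup M] [Module ℚ M] :
    C.carrier ⊗[ℚ] M →ₗ[ℚ] C.carrier ⊗[ℚ] (C.carrier ⊗[ℚ] M) :=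
  (TensorProduct.assoc ℚ C.carrier C.carrier M).toLinearMap.comp
    (TensorProduct.map C.comul LinearMap.id)

/-- The differential of the twisted coextension `C ⊗^τ M`, expressed in terms of the map
`tact : C ⊗ M → M`, `c ⊗ m ↦ τ(c)·m`:
`d(c ⊗ m) = dc ⊗ m + (-1)^{|c|} c ⊗ dm + (-1)^{|c₍₀₎|} c₍₀₎ ⊗ τ(c₍₁₎)·m`. -/
def coextDiffFrom (C : DGCoalgebra) (M : Type) [AddCommGroup M] [Module ℚ M]
    (dM : M →ₗ[ℚ] M) (tact : C.carrier ⊗[ℚ] M →ₗ[ℚ] M) :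
    C.carrier ⊗[ℚ] M →ₗ[ℚ] C.carrier ⊗[ℚ] M :=
  TensorProduct.map C.d LinearMap.id + TensorProduct.map (parityOf C.grading) dM
    + (TensorProduct.map (parityOf C.grading) tact).comp (coextCoact C M)

/-- The differential of the twisted coextension `C ⊗^τ M` of an `A`-module `(M, dM, act)`. -/
def coextDiff (C : DGCoalgebra) (A : DGAlgebra) (τ : TwistingChain C A)
    (M : Type) [AddCommGroup M] [Module ℚ M]
    (dM : M →ₗ[ℚ] M) (act : A.carrier ⊗[ℚ] M →ₗ[ℚ] M) :
    C.carrier ⊗[ℚ] M →ₗ[ℚ] C.carrier ⊗[ℚ] M :=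
  coextDiffFrom C M dM (act.comp (TensorProduct.map τ.toFun LinearMap.id))

/-- Morphisms of dg algebras. -/
structure DGAlgebraHom (A B : DGAlgebra) where
  toLinearMap : A.carrier →ₗ[ℚ] B.carrier
  mem : ∀ (n : ℤ), ∀ x ∈ A.grading n, toLinearMap x ∈ B.grading n
  chain : toLinearMap.comp A.d = B.d.comp toLinearMap
  map_one : toLinearMap A.one = B.one
  map_mul : ∀ x y : A.carrier, toLinearMap (A.mul x y) = B.mul (toLinearMap x) (toLinearMap y)

/-- Data exhibiting a dg algebra as the cobar construction `ΩC` of a coaugmented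
dg coalgebra `C`, via the universal twisting chain `t : C ⇝ ΩC`:
dg algebra maps `ΩC → A` correspond bijectively to twisting chains `C ⇝ A`
vanishing on the coaugmentation. -/
structure CobarData (C : CoaugDGCoalgebra) where
  alg : DGAlgebra
  t : TwistingChain C.toDGCoalgebra alg
  t_one : t.toFun C.one = 0
  univ : ∀ (A : DGAlgebra) (τ : TwistingChain C.toDGCoalgebra A), τ.toFun C.one = 0 →
    ∃! F : DGAlgebraHom alg A, F.toLinearMap.comp t.toFun = τ.toFun

/-- A morphism of `C`-comodules is a `t`-equivalence if the induced morphism of twisted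
extensions `ΩC ⊗_t N → ΩC ⊗_t M` is a quasi-isomorphism. -/
def IsTEquiv (C : CoaugDGCoalgebra) (Ω : CobarData C) (N M : DGComodule C.toDGCoalgebra)
    (f : N.carrier →ₗ[ℚ] M.carrier) : Prop :=
  IsQuasiIso (extDiff C.toDGCoalgebra Ω.alg Ω.t N.carrier N.d N.coact)
    (extDiff C.toDGCoalgebra Ω.alg Ω.t M.carrier M.d M.coact)
    (TensorProduct.map LinearMap.id f)

/-!
Filter `C ⊗ M` by degree in `C`. As `τ` lowers degree and `A` is non-negatively graded, `τ` kills
`C₀`; hence the terms `dc ⊗ m` and `± c₍₀₎ ⊗ τ(c₍₁₎) · m` of the twisted differential lie in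
strictly smaller filtration than `c ⊗ m`, and the differential is a perturbation of `± 1 ⊗ d_M`.
The cone of `f` is exact, so over a field it has a contraction `h`, and `± 1 ⊗ h` contracts the
cone of `1 ⊗ f` for the unperturbed differentials. Subtracting from a cycle of the twisted cone
the boundary of its image under this contraction lowers its filtration, and the filtration is
exhaustive and starts at `0`, so the twisted cone is exact too.
-/

section Acyclicity

open Function

variable {R V W : Type*}

theorem exists_contraction_of_exact [DivisionRing R] [AddCommGroup V] [Module R V]
    {D : V →ₗ[R] V} (hD : Exact D D) :
    ∃ h : V →ₗ[R] V, D ∘ₗ h + h ∘ₗ D = LinearMap.id := by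
  obtain ⟨r, hr⟩ := D.rangeRestrict.exists_rightInverse_of_surjective D.range_rangeRestrict
  obtain ⟨s, hs⟩ := r.exists_extend
  have hDsD (x : V) : D (s (D x)) = D x :=
    calc D (s (D x)) = D (r (D.rangeRestrict x)) :=
          congrArg D (LinearMap.congr_fun hs (D.rangeRestrict x))
      _ = D x := congrArg Subtype.val (LinearMap.congr_fun hr (D.rangeRestrict x))
  refine ⟨s ∘ₗ (LinearMap.id - s ∘ₗ D), LinearMap.ext fun x => ?_⟩
  obtain ⟨y, hy⟩ := (hD (x - s (D x))).1 (by rw [map_sub, hDsD, sub_self])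
  have hDs : D (s (x - s (D x))) = x - s (D x) := by rw [← hy, hDsD]
  simp only [LinearMap.add_apply, LinearMap.comp_apply, LinearMap.sub_apply, LinearMap.id_apply,
    hDs, hD.apply_apply_eq_zero, map_zero, sub_zero, sub_add_cancel]

variable [Ring R] [AddCommGroup V] [Module R V] [AddCommGroup W] [Module R W]

theorem exact_of_forall_exists_sub_mem {D : V →ₗ[R] V} (hD : D ∘ₗ D = 0)
    {F : ℕ → Submodule R V} (hF_zero : F 0 = ⊥) (hF_exh : ∀ x, ∃ n, x ∈ F n)
    (h : ∀ n, ∀ x ∈ F (n + 1), D x = 0 → ∃ y, x - D y ∈ F n) : Exact D D := by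
  have hDD (x : V) : D (D x) = 0 := LinearMap.congr_fun hD x
  refine fun x => ⟨fun hx => ?_, fun ⟨y, hy⟩ => hy ▸ hDD y⟩
  obtain ⟨n, hn⟩ := hF_exh x
  induction n generalizing x with
  | zero =>
    rw [hF_zero, Submodule.mem_bot] at hn
    exact ⟨0, by rw [map_zero, hn]⟩
  | succ n ih =>
    obtain ⟨y, hy⟩ := h n x hn hx
    obtain ⟨z, hz⟩ := ih (x - D y) (by rw [map_sub, hx, hDD, sub_zero]) hy
    exact ⟨z + y, by rw [map_add, hz, sub_add_cancel]⟩

theorem contraction_of_retract {E h : V →ₗ[R] V} {D : W →ₗ[R] W} {p : V →ₗ[R] W}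
    {i : W →ₗ[R] V} (hpi : p ∘ₗ i = LinearMap.id) (hp : D ∘ₗ p = p ∘ₗ E) (hi : i ∘ₗ D = E ∘ₗ i)
    (hh : E ∘ₗ h + h ∘ₗ E = LinearMap.id) :
    D ∘ₗ (p ∘ₗ h ∘ₗ i) + (p ∘ₗ h ∘ₗ i) ∘ₗ D = LinearMap.id :=
  calc D ∘ₗ (p ∘ₗ h ∘ₗ i) + (p ∘ₗ h ∘ₗ i) ∘ₗ D
      = p ∘ₗ (E ∘ₗ h + h ∘ₗ E) ∘ₗ i := by
        rw [← LinearMap.comp_assoc, hp]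
        simp only [LinearMap.comp_assoc, hi, LinearMap.add_comp, LinearMap.comp_add]
    _ = LinearMap.id := by rw [hh, LinearMap.id_comp, hpi]

theorem exact_of_filtered_perturbation {D D₀ H : V →ₗ[R] V} (hD : D ∘ₗ D = 0)
    (hH : D₀ ∘ₗ H + H ∘ₗ D₀ = LinearMap.id)
    {F : ℕ → Submodule R V} (hF_zero : F 0 = ⊥) (hF_exh : ∀ x, ∃ n, x ∈ F n)
    (hHF : ∀ n, F n ≤ (F n).comap H) (hDF : ∀ n, F (n + 1) ≤ (F n).comap (D - D₀)) :
    Exact D D := by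
  refine exact_of_forall_exists_sub_mem hD hF_zero hF_exh fun n x hx hDx => ⟨H x, ?_⟩
  have hx_eq : x - D (H x) = -((D - D₀) (H x) + H ((D - D₀) x)) := by
    have hHx : D₀ (H x) + H (D₀ x) = x := LinearMap.congr_fun hH x
    simp only [LinearMap.sub_apply, map_sub, hDx, map_zero]
    nth_rewrite 1 [← hHx]
    abel
  rw [hx_eq]
  exact neg_mem (add_mem (hDF n (hHF _ hx)) (hHF n (hDF n hx)))

/-- The differential `(v, w) ↦ (-dv, fv + dw)` of the mapping cone `V[1] ⊕ W` of `f : V → W`. -/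
def coneDiff (dV : V →ₗ[R] V) (dW : W →ₗ[R] W) (f : V →ₗ[R] W) : V × W →ₗ[R] V × W :=
  (-(dV ∘ₗ LinearMap.fst R V W)).prod (f ∘ₗ LinearMap.fst R V W + dW ∘ₗ LinearMap.snd R V W)

theorem coneDiff_apply (dV : V →ₗ[R] V) (dW : W →ₗ[R] W) (f : V →ₗ[R] W) (x : V × W) :
    coneDiff dV dW f x = (-dV x.1, f x.1 + dW x.2) := rfl

theorem coneDiff_sub_coneDiff (dV dV' : V →ₗ[R] V) (dW dW' : W →ₗ[R] W) (f : V →ₗ[R] W) :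
    coneDiff dV dW f - coneDiff dV' dW' f = (-(dV - dV')).prodMap (dW - dW') := by
  ext x <;> simp [coneDiff_apply, neg_add_eq_sub]

theorem coneDiff_comp_self {dV : V →ₗ[R] V} {dW : W →ₗ[R] W} {f : V →ₗ[R] W}
    (hV : dV ∘ₗ dV = 0) (hW : dW ∘ₗ dW = 0) (hf : f ∘ₗ dV = dW ∘ₗ f) :
    coneDiff dV dW f ∘ₗ coneDiff dV dW f = 0 := by
  simp only [LinearMap.ext_iff, LinearMap.comp_apply, LinearMap.zero_apply] at hV hW hf
  ext x <;> simp [coneDiff_apply, hV, hW, hf]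

end Acyclicity

section QuasiIso

variable {V W : Type} [AddCommGroup V] [Module ℚ V] [AddCommGroup W] [Module ℚ W]
  {dV : V →ₗ[ℚ] V} {dW : W →ₗ[ℚ] W} {f : V →ₗ[ℚ] W}

theorem IsQuasiIso.exact_coneDiff (h : IsQuasiIso dV dW f) (hV : dV ∘ₗ dV = 0)
    (hW : dW ∘ₗ dW = 0) (hf : f ∘ₗ dV = dW ∘ₗ f) :
    Function.Exact (coneDiff dV dW f) (coneDiff dV dW f) := by
  rintro ⟨v, w⟩
  refine ⟨fun hvw => ?_, ?_⟩
  · obtain ⟨hv, hw⟩ : dV v = 0 ∧ f v + dW w = 0 := by simpa [coneDiff_apply] using hvw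
    obtain ⟨z, rfl⟩ := h.1 v hv ⟨-w, by rw [map_neg, eq_neg_of_add_eq_zero_left hw]⟩
    have hfz : f (dV z) = dW (f z) := LinearMap.congr_fun hf z
    obtain ⟨x, hx, y, hy⟩ := h.2 (w + f z) (by rw [map_add, ← hfz, add_comm, hw])
    refine ⟨(x - z, y), ?_⟩
    rw [coneDiff_apply, Prod.mk.injEq, ← hy, map_sub, map_sub, hx]
    exact ⟨by abel, by abel⟩
  · rintro ⟨x, hx⟩
    rw [← hx]
    exact LinearMap.congr_fun (coneDiff_comp_self hV hW hf) x

theorem IsQuasiIso.of_exact_coneDiff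
    (h : Function.Exact (coneDiff dV dW f) (coneDiff dV dW f)) : IsQuasiIso dV dW f := by
  constructor
  · rintro x hx ⟨y, hy⟩
    obtain ⟨⟨a, b⟩, hab⟩ := (h (x, -y)).1 (by simp [coneDiff_apply, hx, hy])
    exact ⟨-a, by rw [map_neg]; exact (congrArg Prod.fst hab).symm⟩
  · intro w hw
    obtain ⟨⟨a, b⟩, hab⟩ := (h (0, w)).1 (by simp [coneDiff_apply, hw])
    obtain ⟨ha, hb⟩ : dV a = 0 ∧ f a + dW b = w := by simpa [coneDiff_apply] using hab
    exact ⟨a, ha, b, by rw [← hb, add_sub_cancel_left]⟩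

end QuasiIso

section Parity

theorem tensorMap_neg_left {R X X' Y Y' : Type*} [CommRing R] [AddCommGroup X] [Module R X]
    [AddCommGroup X'] [Module R X'] [AddCommGroup Y] [Module R Y] [AddCommGroup Y'] [Module R Y']
    (f : X →ₗ[R] X') (g : Y →ₗ[R] Y') : TensorProduct.map (-f) g = -TensorProduct.map f g :=
  (TensorProduct.mapBilinear (RingHom.id R) X Y X' Y').map_neg₂ f g

variable {V W : Type} [AddCommGroup V] [Module ℚ V] [AddCommGroup W] [Module ℚ W]

theorem parityOf_apply_of_mem (g : ℤ → Submodule ℚ V) [DirectSum.Decomposition g] {n : ℤ} {x : V}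
    (hx : x ∈ g n) : parityOf g x = (-1 : ℚ) ^ n • x := by
  lift x to g n using hx
  simp only [parityOf, signOpOf, LinearMap.comp_apply, LinearEquiv.coe_coe,
    DirectSum.decomposeLinearEquiv_apply, DirectSum.decompose_coe, one_mul]
  exact DirectSum.toModule_lof (M := fun i => g i) ℚ
    (φ := fun n => ((-1 : ℚ) ^ n) • (g n).subtype) n x

theorem parityOf_mem (g : ℤ → Submodule ℚ V) [DirectSum.Decomposition g] {n : ℤ} {x : V}
    (hx : x ∈ g n) : parityOf g x ∈ g n := by
  rw [parityOf_apply_of_mem g hx]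
  exact Submodule.smul_mem _ _ hx

theorem parityOf_comp_self (g : ℤ → Submodule ℚ V) [DirectSum.Decomposition g] :
    parityOf g ∘ₗ parityOf g = LinearMap.id := by
  refine DirectSum.decompose_lhom_ext g fun n => LinearMap.ext fun x => ?_
  simp [parityOf_apply_of_mem g x.2, smul_smul, ← mul_zpow]

theorem parityOf_parityOf (g : ℤ → Submodule ℚ V) [DirectSum.Decomposition g] (x : V) :
    parityOf g (parityOf g x) = x :=
  LinearMap.congr_fun (parityOf_comp_self g) x

theorem DGVect.d_comp_parityOf (V : DGVect) :
    V.d ∘ₗ parityOf V.grading = -(parityOf V.grading ∘ₗ V.d) := by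
  refine DirectSum.decompose_lhom_ext V.grading fun n => LinearMap.ext fun x => ?_
  simp [parityOf_apply_of_mem V.grading x.2,
    parityOf_apply_of_mem V.grading (V.d_mem n x x.2), zpow_sub_one₀, inv_neg]

theorem tensorGrading_le_iff {gV : ℤ → Submodule ℚ V} {gW : ℤ → Submodule ℚ W} {n : ℤ}
    {p : Submodule ℚ (V ⊗[ℚ] W)} :
    tensorGrading gV gW n ≤ p ↔
      ∀ i j, i + j = n → ∀ v ∈ gV i, ∀ w ∈ gW j, v ⊗ₜ w ∈ p := by
  have hrange (i j : ℤ) : LinearMap.range (TensorProduct.map (gV i).subtype (gW j).subtype) =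
      Submodule.map₂ (TensorProduct.mk ℚ V W) (gV i) (gW j) :=
    TensorProduct.range_mapIncl (gV i) (gW j)
  simp only [tensorGrading, hrange, iSup_le_iff, Subtype.forall, Prod.forall, Submodule.map₂_le,
    TensorProduct.mk_apply]

theorem map_parityOf_parityOf_of_mem (gV : ℤ → Submodule ℚ V) (gW : ℤ → Submodule ℚ W)
    [DirectSum.Decomposition gV] [DirectSum.Decomposition gW] {n : ℤ} {u : V ⊗[ℚ] W}
    (hu : u ∈ tensorGrading gV gW n) :
    TensorProduct.map (parityOf gV) (parityOf gW) u = (-1 : ℚ) ^ n • u := by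
  suffices tensorGrading gV gW n ≤ LinearMap.eqLocus
      (TensorProduct.map (parityOf gV) (parityOf gW)) ((-1 : ℚ) ^ n • LinearMap.id) from this hu
  refine tensorGrading_le_iff.2 ?_
  rintro i j rfl v hv w hw
  simp [LinearMap.mem_eqLocus, parityOf_apply_of_mem gV hv, parityOf_apply_of_mem gW hw,
    TensorProduct.smul_tmul', TensorProduct.tmul_smul, smul_smul, zpow_add₀, mul_comm]

theorem DGCoalgebra.comul_comp_parityOf (C : DGCoalgebra) :
    C.comul ∘ₗ parityOf C.grading =
      TensorProduct.map (parityOf C.grading) (parityOf C.grading) ∘ₗ C.comul := by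
  refine DirectSum.decompose_lhom_ext C.grading fun n => LinearMap.ext fun x => ?_
  simp [parityOf_apply_of_mem C.grading x.2,
    map_parityOf_parityOf_of_mem _ _ (C.comul_mem n x x.2)]

end Parity


section Coextension

variable (C : DGCoalgebra) {M N : Type} [AddCommGroup M] [Module ℚ M] [AddCommGroup N] [Module ℚ N]

theorem coextCoact_comp_map_of_comul_comp {a b e : C.carrier →ₗ[ℚ] C.carrier}
    (h : C.comul ∘ₗ a = TensorProduct.map b e ∘ₗ C.comul) (g : M →ₗ[ℚ] N) :
    coextCoact C N ∘ₗ TensorProduct.map a g =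
      TensorProduct.map b (TensorProduct.map e g) ∘ₗ coextCoact C M := by
  simp only [coextCoact, LinearMap.comp_assoc, ← TensorProduct.map_comp, LinearMap.id_comp, h]
  rw [← LinearMap.comp_assoc _ _ (TensorProduct.map b _), TensorProduct.map_map_comp_assoc_eq,
    LinearMap.comp_assoc, ← TensorProduct.map_comp, LinearMap.comp_id]

theorem coextCoact_comp_map_d :
    coextCoact C M ∘ₗ TensorProduct.map C.d LinearMap.id =
      (TensorProduct.map C.d LinearMap.id +
        TensorProduct.map (parityOf C.grading) (TensorProduct.map C.d LinearMap.id)) ∘ₗ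
          coextCoact C M := by
  rw [← TensorProduct.map_id (R := ℚ) (M := C.carrier) (N := M)]
  simp only [coextCoact, LinearMap.comp_assoc, ← TensorProduct.map_comp, LinearMap.id_comp,
    C.comul_chain, LinearMap.add_comp, TensorProduct.map_add_left, LinearMap.comp_add]
  simp only [← LinearMap.comp_assoc, TensorProduct.map_map_comp_assoc_eq]
  simp only [LinearMap.comp_assoc, ← TensorProduct.map_comp, LinearMap.id_comp]

theorem coextCoact_comp_coextCoact :
    coextCoact C (C.carrier ⊗[ℚ] M) ∘ₗ coextCoact C M =
      TensorProduct.map LinearMap.id (coextCoact C M) ∘ₗ coextCoact C M := by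
  let Δ := C.comul
  let α (X Y Z : Type) [AddCommGroup X] [Module ℚ X] [AddCommGroup Y] [Module ℚ Y]
      [AddCommGroup Z] [Module ℚ Z] := (TensorProduct.assoc ℚ X Y Z).toLinearMap
  have pentagon :
      α C.carrier C.carrier (C.carrier ⊗[ℚ] M) ∘ₗ α (C.carrier ⊗[ℚ] C.carrier) C.carrier M =
        TensorProduct.map LinearMap.id (α C.carrier C.carrier M) ∘ₗ
          α C.carrier (C.carrier ⊗[ℚ] C.carrier) M ∘ₗ
            TensorProduct.map (α C.carrier C.carrier C.carrier) LinearMap.id :=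
    TensorProduct.ext_fourfold fun _ _ _ _ => rfl
  calc coextCoact C (C.carrier ⊗[ℚ] M) ∘ₗ coextCoact C M
      = α _ _ _ ∘ₗ (TensorProduct.map Δ (TensorProduct.map LinearMap.id LinearMap.id) ∘ₗ
          α _ _ _) ∘ₗ TensorProduct.map Δ LinearMap.id := by
        rw [TensorProduct.map_id]; rfl
    _ = (α _ _ _ ∘ₗ α _ _ _) ∘ₗ TensorProduct.map (TensorProduct.map Δ LinearMap.id ∘ₗ Δ)
          LinearMap.id := by
        rw [TensorProduct.map_map_comp_assoc_eq, LinearMap.comp_assoc, ← TensorProduct.map_comp]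
        rfl
    _ = TensorProduct.map LinearMap.id (α _ _ _) ∘ₗ α _ _ _ ∘ₗ
          TensorProduct.map (TensorProduct.map LinearMap.id Δ ∘ₗ Δ) LinearMap.id := by
        rw [pentagon, ← C.coassoc]
        simp only [LinearMap.comp_assoc, ← TensorProduct.map_comp]; rfl
    _ = TensorProduct.map LinearMap.id (coextCoact C M) ∘ₗ coextCoact C M := by
        have hΔα : α _ _ _ ∘ₗ TensorProduct.map (TensorProduct.map LinearMap.id Δ) LinearMap.id =
            TensorProduct.map LinearMap.id (TensorProduct.map Δ LinearMap.id) ∘ₗ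
              α C.carrier C.carrier M := (TensorProduct.map_map_comp_assoc_eq _ _ _).symm
        rw [← LinearMap.id_comp (LinearMap.id : M →ₗ[ℚ] M), TensorProduct.map_comp,
          ← LinearMap.comp_assoc (TensorProduct.map Δ LinearMap.id), hΔα]
        simp only [coextCoact, ← LinearMap.comp_assoc, ← TensorProduct.map_comp]; rfl

theorem coextCoact_comp_coextDiffFrom (dM : M →ₗ[ℚ] M) (tact : C.carrier ⊗[ℚ] M →ₗ[ℚ] M) :
    coextCoact C M ∘ₗ coextDiffFrom C M dM tact =
      (TensorProduct.map C.d LinearMap.id +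
        TensorProduct.map (parityOf C.grading) (coextDiffFrom C M dM tact)) ∘ₗ
          coextCoact C M := by
  have hσ {X Y : Type} [AddCommGroup X] [Module ℚ X] [AddCommGroup Y] [Module ℚ Y]
      (g : X →ₗ[ℚ] Y) := coextCoact_comp_map_of_comul_comp C C.comul_comp_parityOf g
  have htwist : coextCoact C M ∘ₗ TensorProduct.map (parityOf C.grading) tact ∘ₗ coextCoact C M =
      TensorProduct.map (parityOf C.grading)
        (TensorProduct.map (parityOf C.grading) tact ∘ₗ coextCoact C M) ∘ₗ coextCoact C M := by
    rw [← LinearMap.comp_assoc, hσ, LinearMap.comp_assoc, coextCoact_comp_coextCoact,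
      ← LinearMap.comp_assoc, ← TensorProduct.map_comp, LinearMap.comp_id]
  simp only [coextDiffFrom, LinearMap.comp_add, LinearMap.add_comp, TensorProduct.map_add_right,
    coextCoact_comp_map_d, hσ, htwist, add_assoc]

theorem map_parityOf_comp_coextCoact_comp_coextDiffFrom (dM : M →ₗ[ℚ] M)
    (tact : C.carrier ⊗[ℚ] M →ₗ[ℚ] M) :
    TensorProduct.map (parityOf C.grading) tact ∘ₗ coextCoact C M ∘ₗ coextDiffFrom C M dM tact =
      TensorProduct.map (parityOf C.grading ∘ₗ C.d) tact ∘ₗ coextCoact C M +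
        TensorProduct.map LinearMap.id (tact ∘ₗ coextDiffFrom C M dM tact) ∘ₗ coextCoact C M := by
  rw [coextCoact_comp_coextDiffFrom, ← LinearMap.comp_assoc, LinearMap.comp_add, LinearMap.add_comp,
    ← TensorProduct.map_comp, ← TensorProduct.map_comp, LinearMap.comp_id, parityOf_comp_self]

theorem coextDiffFrom_comp_self {dM : M →ₗ[ℚ] M} {tact : C.carrier ⊗[ℚ] M →ₗ[ℚ] M}
    (hdM : dM ∘ₗ dM = 0) (htact : dM ∘ₗ tact + tact ∘ₗ coextDiffFrom C M dM tact = 0) :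
    coextDiffFrom C M dM tact ∘ₗ coextDiffFrom C M dM tact = 0 := by
  let σ := parityOf C.grading
  have hσσ : σ ∘ₗ σ = LinearMap.id := parityOf_comp_self C.grading
  have hdσ : C.d ∘ₗ σ = -(σ ∘ₗ C.d) := C.d_comp_parityOf
  have hdd : C.d ∘ₗ C.d = 0 := C.d_sq
  set D := coextDiffFrom C M dM tact with hD
  have hd : TensorProduct.map C.d LinearMap.id ∘ₗ D =
      -TensorProduct.map (σ ∘ₗ C.d) dM -
        TensorProduct.map (σ ∘ₗ C.d) tact ∘ₗ coextCoact C M := by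
    simp only [hD, coextDiffFrom, LinearMap.comp_add, ← LinearMap.comp_assoc,
      ← TensorProduct.map_comp, LinearMap.id_comp, hdd, TensorProduct.map_zero_left]
    rw [hdσ]
    simp only [tensorMap_neg_left, LinearMap.neg_comp]
    abel
  have hσdM : TensorProduct.map σ dM ∘ₗ D = TensorProduct.map (σ ∘ₗ C.d) dM +
      TensorProduct.map LinearMap.id (dM ∘ₗ tact) ∘ₗ coextCoact C M := by
    simp only [hD, coextDiffFrom, LinearMap.comp_add, ← LinearMap.comp_assoc,
      ← TensorProduct.map_comp, LinearMap.comp_id]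
    rw [hσσ, hdM, TensorProduct.map_zero_right, add_zero]
  have hσtact : TensorProduct.map σ tact ∘ₗ coextCoact C M ∘ₗ D =
      TensorProduct.map (σ ∘ₗ C.d) tact ∘ₗ coextCoact C M +
        TensorProduct.map LinearMap.id (tact ∘ₗ D) ∘ₗ coextCoact C M :=
    map_parityOf_comp_coextCoact_comp_coextDiffFrom C dM tact
  calc D ∘ₗ D = TensorProduct.map C.d LinearMap.id ∘ₗ D + TensorProduct.map σ dM ∘ₗ D +
        TensorProduct.map σ tact ∘ₗ coextCoact C M ∘ₗ D := by
        nth_rewrite 1 [hD]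
        simp only [coextDiffFrom, LinearMap.add_comp, LinearMap.comp_assoc]; rfl
    _ = TensorProduct.map LinearMap.id (dM ∘ₗ tact + tact ∘ₗ D) ∘ₗ coextCoact C M := by
        rw [hd, hσdM, hσtact, TensorProduct.map_add_right, LinearMap.add_comp]
        abel
    _ = 0 := by rw [htact, TensorProduct.map_zero_right, LinearMap.zero_comp]

end Coextension

section TwistedAction

variable {C : DGCoalgebra} {A : DGAlgebra} (τ : TwistingChain C A) (M : DGModule A)

theorem DGModule.d_comp_actionMap :
    M.d ∘ₗ M.actionMap = M.actionMap ∘ₗ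
      (TensorProduct.map A.d LinearMap.id + TensorProduct.map (parityOf A.grading) M.d) := by
  refine TensorProduct.ext (DirectSum.decompose_lhom_ext A.grading fun n =>
    LinearMap.ext fun a => LinearMap.ext fun m => ?_)
  simp [DGModule.actionMap, M.leibniz n a m a.2, parityOf_apply_of_mem A.grading a.2]

theorem DGModule.actionMap_comp_map_actionMap :
    M.actionMap ∘ₗ TensorProduct.map LinearMap.id M.actionMap ∘ₗ
      (TensorProduct.assoc ℚ A.carrier A.carrier M.carrier).toLinearMap =
        M.actionMap ∘ₗ TensorProduct.map A.mulMap LinearMap.id :=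
  TensorProduct.ext_threefold fun a b m => (M.mul_smul' a b m).symm

theorem TwistingChain.eq_zero_of_mem_grading_zero (hA : A.Connective) :
    ∀ c ∈ C.grading 0, τ.toFun c = 0 := fun c hc => by
  have hτc := τ.mem 0 c hc
  rwa [hA (0 - 1) (by norm_num), Submodule.mem_bot] at hτc

theorem TwistingChain.parityOf_comp_toFun :
    parityOf A.grading ∘ₗ τ.toFun = -(τ.toFun ∘ₗ parityOf C.grading) := by
  refine DirectSum.decompose_lhom_ext C.grading fun n => LinearMap.ext fun c => ?_
  simp [parityOf_apply_of_mem C.grading c.2, parityOf_apply_of_mem A.grading (τ.mem n c c.2),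
    zpow_sub_one₀, inv_neg]

/-- The map `C ⊗ M → M`, `c ⊗ m ↦ τ(c) · m`, which twists the differential of `C ⊗^τ M`. -/
def TwistingChain.act : C.carrier ⊗[ℚ] M.carrier →ₗ[ℚ] M.carrier :=
  M.actionMap ∘ₗ TensorProduct.map τ.toFun LinearMap.id

theorem TwistingChain.act_comp_map_act_comp_coextCoact :
    τ.act M ∘ₗ TensorProduct.map (parityOf C.grading) (τ.act M) ∘ₗ coextCoact C M.carrier =
      M.actionMap ∘ₗ TensorProduct.map (A.mulMap ∘ₗ
        TensorProduct.map (τ.toFun ∘ₗ parityOf C.grading) τ.toFun ∘ₗ C.comul) LinearMap.id :=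
  calc τ.act M ∘ₗ TensorProduct.map (parityOf C.grading) (τ.act M) ∘ₗ coextCoact C M.carrier
      = M.actionMap ∘ₗ TensorProduct.map LinearMap.id M.actionMap ∘ₗ
          (TensorProduct.map (τ.toFun ∘ₗ parityOf C.grading)
            (TensorProduct.map τ.toFun LinearMap.id) ∘ₗ
              (TensorProduct.assoc ℚ C.carrier C.carrier M.carrier).toLinearMap) ∘ₗ
                TensorProduct.map C.comul LinearMap.id := by
        simp only [act, coextCoact, ← LinearMap.comp_assoc]
        simp only [LinearMap.comp_assoc, ← TensorProduct.map_comp, LinearMap.id_comp]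
    _ = (M.actionMap ∘ₗ TensorProduct.map LinearMap.id M.actionMap ∘ₗ
          (TensorProduct.assoc ℚ A.carrier A.carrier M.carrier).toLinearMap) ∘ₗ
            TensorProduct.map (TensorProduct.map (τ.toFun ∘ₗ parityOf C.grading) τ.toFun ∘ₗ
              C.comul) LinearMap.id := by
        rw [TensorProduct.map_map_comp_assoc_eq]
        simp only [LinearMap.comp_assoc, ← TensorProduct.map_comp, LinearMap.id_comp]
    _ = _ := by
        rw [M.actionMap_comp_map_actionMap, LinearMap.comp_assoc, ← TensorProduct.map_comp,
          LinearMap.id_comp]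

theorem TwistingChain.d_comp_act_add_act_comp_coextDiff :
    M.d ∘ₗ τ.act M + τ.act M ∘ₗ coextDiffFrom C M.carrier M.d (τ.act M) = 0 := by
  have hd : M.d ∘ₗ τ.act M =
      M.actionMap ∘ₗ TensorProduct.map (A.d ∘ₗ τ.toFun) LinearMap.id -
        M.actionMap ∘ₗ TensorProduct.map (τ.toFun ∘ₗ parityOf C.grading) M.d := by
    rw [act, ← LinearMap.comp_assoc, M.d_comp_actionMap, LinearMap.comp_assoc, LinearMap.add_comp,
      ← TensorProduct.map_comp, ← TensorProduct.map_comp, τ.parityOf_comp_toFun,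
      tensorMap_neg_left, LinearMap.comp_add, LinearMap.comp_neg, ← sub_eq_add_neg]
    rfl
  have hD : τ.act M ∘ₗ coextDiffFrom C M.carrier M.d (τ.act M) =
      M.actionMap ∘ₗ TensorProduct.map (τ.toFun ∘ₗ C.d) LinearMap.id +
        M.actionMap ∘ₗ TensorProduct.map (τ.toFun ∘ₗ parityOf C.grading) M.d +
          M.actionMap ∘ₗ TensorProduct.map (A.mulMap ∘ₗ
            TensorProduct.map (τ.toFun ∘ₗ parityOf C.grading) τ.toFun ∘ₗ C.comul)
              LinearMap.id := by
    rw [coextDiffFrom, LinearMap.comp_add, τ.act_comp_map_act_comp_coextCoact M]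
    simp only [act, LinearMap.comp_assoc, LinearMap.comp_add, ← TensorProduct.map_comp,
      LinearMap.id_comp]
  calc M.d ∘ₗ τ.act M + τ.act M ∘ₗ coextDiffFrom C M.carrier M.d (τ.act M)
      = M.actionMap ∘ₗ TensorProduct.map (A.d ∘ₗ τ.toFun + τ.toFun ∘ₗ C.d + A.mulMap ∘ₗ
          TensorProduct.map (τ.toFun ∘ₗ parityOf C.grading) τ.toFun ∘ₗ C.comul)
            LinearMap.id := by
        rw [hd, hD, TensorProduct.map_add_left, TensorProduct.map_add_left, LinearMap.comp_add,
          LinearMap.comp_add]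
        abel
    _ = 0 := by rw [τ.twist, TensorProduct.map_zero_left, LinearMap.comp_zero]

theorem TwistingChain.coextDiff_comp_self :
    coextDiff C A τ M.carrier M.d M.actionMap ∘ₗ coextDiff C A τ M.carrier M.d M.actionMap = 0 :=
  coextDiffFrom_comp_self C M.d_sq (τ.d_comp_act_add_act_comp_coextDiff M)

end TwistedAction

section Filtration

variable (C : DGCoalgebra) (M : Type) [AddCommGroup M] [Module ℚ M]

/-- The `n`-th stage `⨁_{q < n} C_q ⊗ M` of the filtration of `C ⊗ M` by degree in `C`. The bound
is strict, so that the filtration starts at `0`. -/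
def coextFiltration (n : ℕ) : Submodule ℚ (C.carrier ⊗[ℚ] M) :=
  ⨆ q : ℤ, ⨆ _ : q < n, Submodule.map₂ (TensorProduct.mk ℚ C.carrier M) (C.grading q) ⊤

variable {C M} {N : Type} [AddCommGroup N] [Module ℚ N]

theorem coextFiltration_le_iff {n : ℕ} {p : Submodule ℚ (C.carrier ⊗[ℚ] M)} :
    coextFiltration C M n ≤ p ↔ ∀ q : ℤ, q < n → ∀ c ∈ C.grading q, ∀ m, c ⊗ₜ m ∈ p := by
  simp [coextFiltration, Submodule.map₂_le]

theorem tmul_mem_coextFiltration {n : ℕ} {q : ℤ} (hq : q < n) {c : C.carrier}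
    (hc : c ∈ C.grading q) (m : M) : c ⊗ₜ m ∈ coextFiltration C M n :=
  coextFiltration_le_iff.1 le_rfl q hq c hc m

theorem coextFiltration_mono : Monotone (coextFiltration C M) := fun _ _ h =>
  coextFiltration_le_iff.2 fun _ hq _ hc m =>
    tmul_mem_coextFiltration (hq.trans_le (Int.ofNat_le.2 h)) hc m

theorem coextFiltration_zero : coextFiltration C M 0 = ⊥ := by
  refine le_bot_iff.1 (coextFiltration_le_iff.2 fun q hq c hc m => ?_)
  rw [C.nonneg q hq, Submodule.mem_bot] at hc
  rw [hc, TensorProduct.zero_tmul, Submodule.mem_bot]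

theorem exists_mem_coextFiltration (x : C.carrier ⊗[ℚ] M) : ∃ n, x ∈ coextFiltration C M n := by
  have hiSup : ⨆ n, coextFiltration C M n = ⊤ := by
    refine top_unique ?_
    rw [← TensorProduct.map₂_mk_top_top_eq_top,
      ← (DirectSum.Decomposition.isInternal C.grading).submodule_iSup_eq_top,
      Submodule.map₂_iSup_left]
    refine iSup_le fun q => Submodule.map₂_le.2 fun c hc m _ => ?_
    exact Submodule.mem_iSup_of_mem (q + 1).toNat
      (tmul_mem_coextFiltration (by omega) hc m)
  exact (Submodule.mem_iSup_of_directed _ coextFiltration_mono.directed_le).1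
    (hiSup ▸ Submodule.mem_top : x ∈ ⨆ n, coextFiltration C M n)

theorem coextFiltration_le_comap_map {a : C.carrier →ₗ[ℚ] C.carrier}
    (ha : ∀ q, C.grading q ≤ (C.grading q).comap a) (g : M →ₗ[ℚ] N) (n : ℕ) :
    coextFiltration C M n ≤ (coextFiltration C N n).comap (TensorProduct.map a g) :=
  coextFiltration_le_iff.2 fun q hq _ hc m => tmul_mem_coextFiltration hq (ha q hc) (g m)

theorem coextFiltration_succ_le_comap_coextDiffFrom_sub (dM : M →ₗ[ℚ] M)
    {tact : C.carrier ⊗[ℚ] M →ₗ[ℚ] M} (htact : ∀ c ∈ C.grading 0, ∀ m, tact (c ⊗ₜ m) = 0) (n : ℕ) :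
    coextFiltration C M (n + 1) ≤ (coextFiltration C M n).comap
      (coextDiffFrom C M dM tact - TensorProduct.map (parityOf C.grading) dM) := by
  refine coextFiltration_le_iff.2 fun q hq c hc m => ?_
  have hd : C.d c ⊗ₜ m ∈ coextFiltration C M n :=
    tmul_mem_coextFiltration (by push_cast at hq; omega) (C.d_mem q c hc) m
  have htwist : tensorGrading C.grading C.grading q ≤ (coextFiltration C M n).comap
      (TensorProduct.map (parityOf C.grading) tact ∘ₗ
        (TensorProduct.assoc ℚ C.carrier C.carrier M).toLinearMap ∘ₗ
          (TensorProduct.mk ℚ (C.carrier ⊗[ℚ] C.carrier) M).flip m) := by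
    refine tensorGrading_le_iff.2 fun i j hij v hv w hw => ?_
    simp only [Submodule.mem_comap, LinearMap.comp_apply, LinearMap.flip_apply,
      TensorProduct.mk_apply, LinearEquiv.coe_coe, TensorProduct.assoc_tmul, TensorProduct.map_tmul]
    obtain hj | rfl | hj := lt_trichotomy j 0
    · rw [C.nonneg j hj, Submodule.mem_bot] at hw
      rw [hw, TensorProduct.zero_tmul, map_zero, TensorProduct.tmul_zero]
      exact zero_mem _
    · rw [htact w hw, TensorProduct.tmul_zero]
      exact zero_mem _
    · exact tmul_mem_coextFiltration (by push_cast at hq; omega) (parityOf_mem _ hv) _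
  rw [Submodule.mem_comap, coextDiffFrom, add_right_comm, add_sub_cancel_right]
  exact add_mem hd (htwist (C.comul_mem q c hc))

end Filtration

section Cone

variable {C : DGCoalgebra} {M N : Type} [AddCommGroup M] [Module ℚ M] [AddCommGroup N] [Module ℚ N]

theorem map_id_comp_coextDiffFrom {dM : M →ₗ[ℚ] M} {dN : N →ₗ[ℚ] N}
    {tM : C.carrier ⊗[ℚ] M →ₗ[ℚ] M} {tN : C.carrier ⊗[ℚ] N →ₗ[ℚ] N} {f : M →ₗ[ℚ] N}
    (hf : f ∘ₗ dM = dN ∘ₗ f) (hft : f ∘ₗ tM = tN ∘ₗ TensorProduct.map LinearMap.id f) :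
    TensorProduct.map LinearMap.id f ∘ₗ coextDiffFrom C M dM tM =
      coextDiffFrom C N dN tN ∘ₗ TensorProduct.map LinearMap.id f := by
  have hcoact := coextCoact_comp_map_of_comul_comp C (a := LinearMap.id) (b := LinearMap.id)
    (e := LinearMap.id) (by rw [TensorProduct.map_id]; rfl) f
  simp only [coextDiffFrom, LinearMap.comp_add, LinearMap.add_comp, LinearMap.comp_assoc, hcoact]
  simp only [← LinearMap.comp_assoc, ← TensorProduct.map_comp, LinearMap.id_comp,
    LinearMap.comp_id, hf, hft]

variable (C M N)

/-- The isomorphism `C ⊗ M[1] ⊕ C ⊗ N → (C ⊗ M)[1] ⊕ C ⊗ N`. The sign `(-1)^{|c|}` on the first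
summand is the Koszul sign for moving the shift past `c`. -/
def coextConeMap : C.carrier ⊗[ℚ] (M × N) →ₗ[ℚ] (C.carrier ⊗[ℚ] M) × (C.carrier ⊗[ℚ] N) :=
  (TensorProduct.map (parityOf C.grading) (LinearMap.fst ℚ M N)).prod
    (TensorProduct.map LinearMap.id (LinearMap.snd ℚ M N))

/-- The inverse of `coextConeMap`. -/
def coextConeInv : (C.carrier ⊗[ℚ] M) × (C.carrier ⊗[ℚ] N) →ₗ[ℚ] C.carrier ⊗[ℚ] (M × N) :=
  (TensorProduct.map (parityOf C.grading) (LinearMap.inl ℚ M N)).coprod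
    (TensorProduct.map LinearMap.id (LinearMap.inr ℚ M N))

variable {C M N}

theorem coextConeMap_comp_coextConeInv :
    coextConeMap C M N ∘ₗ coextConeInv C M N = LinearMap.id := by
  ext c m <;> simp [coextConeMap, coextConeInv, parityOf_parityOf]

theorem coneDiff_comp_coextConeMap (dM : M →ₗ[ℚ] M) (dN : N →ₗ[ℚ] N) (f : M →ₗ[ℚ] N) :
    coneDiff (TensorProduct.map (parityOf C.grading) dM) (TensorProduct.map (parityOf C.grading) dN)
        (TensorProduct.map LinearMap.id f) ∘ₗ coextConeMap C M N =
      coextConeMap C M N ∘ₗ TensorProduct.map (parityOf C.grading) (coneDiff dM dN f) := by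
  ext c m <;> simp [coextConeMap, coneDiff_apply, TensorProduct.tmul_neg]

theorem coextConeInv_comp_coneDiff (dM : M →ₗ[ℚ] M) (dN : N →ₗ[ℚ] N) (f : M →ₗ[ℚ] N) :
    coextConeInv C M N ∘ₗ coneDiff (TensorProduct.map (parityOf C.grading) dM)
        (TensorProduct.map (parityOf C.grading) dN) (TensorProduct.map LinearMap.id f) =
      TensorProduct.map (parityOf C.grading) (coneDiff dM dN f) ∘ₗ coextConeInv C M N := by
  refine LinearMap.prod_ext ?_ ?_ <;> refine TensorProduct.ext' fun c m => ?_
  · simp [coextConeInv, coneDiff_apply, parityOf_parityOf, ← TensorProduct.tmul_neg,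
      ← TensorProduct.tmul_add]
  · simp [coextConeInv, coneDiff_apply]

theorem map_parityOf_contraction {K k : M →ₗ[ℚ] M} (hk : K ∘ₗ k + k ∘ₗ K = LinearMap.id) :
    TensorProduct.map (parityOf C.grading) K ∘ₗ TensorProduct.map (parityOf C.grading) k +
      TensorProduct.map (parityOf C.grading) k ∘ₗ TensorProduct.map (parityOf C.grading) K =
        LinearMap.id := by
  rw [← TensorProduct.map_comp, ← TensorProduct.map_comp, ← TensorProduct.map_add_right,
    parityOf_comp_self, hk, TensorProduct.map_id]

theorem IsQuasiIso.map_coextDiffFrom {dM : M →ₗ[ℚ] M} {dN : N →ₗ[ℚ] N} {f : M →ₗ[ℚ] N}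
    {tM : C.carrier ⊗[ℚ] M →ₗ[ℚ] M} {tN : C.carrier ⊗[ℚ] N →ₗ[ℚ] N}
    (hq : IsQuasiIso dM dN f) (hdM : dM ∘ₗ dM = 0) (hdN : dN ∘ₗ dN = 0) (hf : f ∘ₗ dM = dN ∘ₗ f)
    (hDM : coextDiffFrom C M dM tM ∘ₗ coextDiffFrom C M dM tM = 0)
    (hDN : coextDiffFrom C N dN tN ∘ₗ coextDiffFrom C N dN tN = 0)
    (hft : f ∘ₗ tM = tN ∘ₗ TensorProduct.map LinearMap.id f)
    (htM : ∀ c ∈ C.grading 0, ∀ m, tM (c ⊗ₜ m) = 0)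
    (htN : ∀ c ∈ C.grading 0, ∀ n, tN (c ⊗ₜ n) = 0) :
    IsQuasiIso (coextDiffFrom C M dM tM) (coextDiffFrom C N dN tN)
      (TensorProduct.map LinearMap.id f) := by
  obtain ⟨k, hk⟩ := exists_contraction_of_exact (hq.exact_coneDiff hdM hdN hf)
  have hH := contraction_of_retract coextConeMap_comp_coextConeInv
    (coneDiff_comp_coextConeMap (C := C) dM dN f) (coextConeInv_comp_coneDiff dM dN f)
    (map_parityOf_contraction hk)
  have hσ (q : ℤ) : C.grading q ≤ (C.grading q).comap (parityOf C.grading) :=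
    fun _ => parityOf_mem C.grading
  refine .of_exact_coneDiff (exact_of_filtered_perturbation
    (F := fun n => (coextFiltration C M n).prod (coextFiltration C N n))
    (coneDiff_comp_self hDM hDN (map_id_comp_coextDiffFrom hf hft)) hH
    (by simp only [coextFiltration_zero, Submodule.prod_bot]) (fun x => ?_) (fun n x hx => ?_)
    fun n => ?_)
  · obtain ⟨i, hi⟩ := exists_mem_coextFiltration x.1
    obtain ⟨j, hj⟩ := exists_mem_coextFiltration x.2
    exact ⟨max i j, coextFiltration_mono (le_max_left i j) hi,
      coextFiltration_mono (le_max_right i j) hj⟩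
  · have hinv : coextConeInv C M N x ∈ coextFiltration C (M × N) n :=
      add_mem (coextFiltration_le_comap_map hσ _ n hx.1)
        (coextFiltration_le_comap_map (fun _ => le_rfl) _ n hx.2)
    have hk_inv := coextFiltration_le_comap_map hσ k n hinv
    exact ⟨coextFiltration_le_comap_map hσ _ n hk_inv,
      coextFiltration_le_comap_map (fun _ => le_rfl) _ n hk_inv⟩
  · rw [coneDiff_sub_coneDiff]
    exact fun x hx => ⟨neg_mem (coextFiltration_succ_le_comap_coextDiffFrom_sub dM htM n hx.1),
      coextFiltration_succ_le_comap_coextDiffFrom_sub dN htN n hx.2⟩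

end Cone

theorem twisted_coextension_preserves_quasiIso_of_boundedBelow_general
    (C : DGCoalgebra) (A : DGAlgebra) (τ : TwistingChain C A)
    (hτ : ∀ c ∈ C.grading 0, τ.toFun c = 0) (M M' : DGModule A)
    (f : M.carrier →ₗ[ℚ] M'.carrier) (hf : IsModuleHom A M M' f) (hq : IsQuasiIso M.d M'.d f) :
    IsQuasiIso (coextDiff C A τ M.carrier M.d M.actionMap)
      (coextDiff C A τ M'.carrier M'.d M'.actionMap) (TensorProduct.map LinearMap.id f) := by
  obtain ⟨-, hfd, hfact⟩ := hf
  have hfτ : f ∘ₗ τ.act M = τ.act M' ∘ₗ TensorProduct.map LinearMap.id f := by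
    rw [TwistingChain.act, TwistingChain.act, ← LinearMap.comp_assoc, hfact]
    simp only [LinearMap.comp_assoc, ← TensorProduct.map_comp, LinearMap.id_comp, LinearMap.comp_id]
  have act_eq_zero (M : DGModule A) (c) (hc : c ∈ C.grading 0) (m) : τ.act M (c ⊗ₜ m) = 0 := by
    simp [TwistingChain.act, hτ c hc]
  exact hq.map_coextDiffFrom M.d_sq M'.d_sq hfd (τ.coextDiff_comp_self M) (τ.coextDiff_comp_self M')
    hfτ (act_eq_zero M) (act_eq_zero M')

/-! ## Statement 15: twisted coextension preserves quasi-isomorphisms of bounded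
below modules -/

/-- Let `C` be a 2-reduced dg coalgebra, `A` a connective dg algebra
and `τ : C ⇝ A` a twisting chain.  If `f : M → M'` is a quasi-isomorphism between
bounded below left dg `A`-modules, then the induced map of twisted coextensions
`C ⊗^τ M → C ⊗^τ M'` is a quasi-isomorphism. -/
theorem twisted_coextension_preserves_quasiIso_of_boundedBelow
    (C : CoaugDGCoalgebra) (hred : C.TwoReduced)
    (A : DGAlgebra) (hA : A.Connective) (τ : TwistingChain C.toDGCoalgebra A)
    (M M' : DGModule A) (hM : M.toDGVect.BoundedBelow) (hM' : M'.toDGVect.BoundedBelow)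
    (f : M.carrier →ₗ[ℚ] M'.carrier) (hf : IsModuleHom A M M' f)
    (hq : IsQuasiIso M.d M'.d f) :
    IsQuasiIso
      (coextDiff C.toDGCoalgebra A τ M.carrier M.d M.actionMap)
      (coextDiff C.toDGCoalgebra A τ M'.carrier M'.d M'.actionMap)
      (TensorProduct.map LinearMap.id f) :=
  twisted_coextension_preserves_quasiIso_of_boundedBelow_general C.toDGCoalgebra A τ
    (τ.eq_zero_of_mem_grading_zero hA) M M' f hf hq

end
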